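/- Assume condition (R). Then the radius of convexity r^c(g_{γ,σ}(·;q)) = r^c_0(g_{γ,σ}(·;q)) satisfies Γ_q(γ+3)/(9σ²Γ_q(γ+1)) < (r^c(g_{γ,σ}(·;q)))² < 9Γ_q(γ+3)Γ_q(γ+5) / ( σ²(81Γ_q(γ+1)Γ_q(γ+5) − 50q²Γ_q(γ+3)²) ). -/

import Mathlib

noncomputable def qPochInf (a q : ℝ) : ℝ := ∏' k : ℕ, (1 - a * q ^ k)

noncomputable def qGamma (q x : ℝ) : ℝ :=
  qPochInf q q * (1 - q) ^ (1 - x) / qPochInf (q ^ x) q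

noncomputable def qML (γ σ q : ℝ) (z : ℂ) : ℂ :=
  ∑' n : ℕ,
    (((-1) ^ n * σ ^ (2 * n) * q ^ (n * (n - 1)) / qGamma q (2 * n + γ + 1) : ℝ) : ℂ) * z ^ (2 * n)

noncomputable def qMLR (γ σ q : ℝ) (x : ℝ) : ℝ :=
  ∑' n : ℕ,
    ((-1) ^ n * σ ^ (2 * n) * q ^ (n * (n - 1)) / qGamma q (2 * n + γ + 1)) * x ^ (2 * n)

def condR (q γ : ℝ) : Prop :=
  (γ = 0 ∨ γ = 1) ∨
    (γ ∈ Set.Ioo (0 : ℝ) 2 ∧ γ ≠ 1 ∧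
      1 < q⁻¹ * (1 - q) * (1 - q ^ (γ + 1)) * (1 - q ^ (γ + 2)))

noncomputable def radiusStarlike (α : ℝ) (f : ℂ → ℂ) : ℝ :=
  sSup {r : ℝ | 0 < r ∧ ∀ z : ℂ, 0 < ‖z‖ → ‖z‖ < r →
    α < (z * deriv f z / f z).re}

noncomputable def radiusConvex (α : ℝ) (f : ℂ → ℂ) : ℝ :=
  sSup {r : ℝ | 0 < r ∧ ∀ z : ℂ, ‖z‖ < r →
    α < (1 + z * deriv (deriv f) z / deriv f z).re}

noncomputable def fML (γ σ q : ℝ) (z : ℂ) : ℂ :=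
  Complex.exp ((1 / ((γ : ℂ) + 1)) *
    Complex.log (z ^ ((γ : ℂ) + 1) * (qGamma q (γ + 1) : ℂ) * qML γ σ q z))

noncomputable def gML (γ σ q : ℝ) (z : ℂ) : ℂ :=
  z * (qGamma q (γ + 1) : ℂ) * qML γ σ q z

noncomputable def hML (γ σ q : ℝ) (z : ℂ) : ℂ :=
  z * (qGamma q (γ + 1) : ℂ) *
    ∑' n : ℕ,
      (((-1) ^ n * σ ^ (2 * n) * q ^ (n * (n - 1)) / qGamma q (2 * n + γ + 1) : ℝ) : ℂ) * z ^ n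

noncomputable def hMLR (γ σ q : ℝ) (x : ℝ) : ℝ :=
  x * qGamma q (γ + 1) *
    ∑' n : ℕ,
      ((-1) ^ n * σ ^ (2 * n) * q ^ (n * (n - 1)) / qGamma q (2 * n + γ + 1)) * x ^ n

/-!
Write `f(z) = z M₀(z)` for the function under study, where `M_k(z) = ∑ (2n+1)ᵏ (-1)ⁿ dₙ z²ⁿ` and
`d₀ = 1`. Since `(z M_k)' = M_{k+1}`, the convexity quotient `1 + z f''/f'` equals `M₂/M₁`, and only
the decay of the `dₙ` matters. The recursion for `Γ_q` gives the ratios `d_{n+1}/dₙ` explicitly;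
they are all at most `d₁`, and the first three are log-convex, so that `d₂³ ≤ d₁³ d₃`.

* Lower bound: for `9 d₁ |z|² ≤ 1`, the partial sums up to `z⁴` and a geometric tail estimate give
  `|M₂ - M₁| < |M₁|`, hence `Re (M₂/M₁) > 0` on a closed disc.
* Upper bound: at the real point `r` with `r² (81 d₁² - 50 d₂) = 9 d₁`, alternating series estimates
  give `M₁(r) > 0 > M₂(r)`; the lower bound `d₃ ≥ d₂³/d₁³` makes the `r⁶` term large enough.

Both bounds are strict because the convexity quotient is continuous.
-/

section OddSeries

/-- The `n`-th term of `∑ (2n+1)ᵏ aₙ z²ⁿ`. For `k = 0` and after multiplication by `z` these are the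
terms of the odd power series with coefficients `aₙ`; applying `w ↦ (z w)'` raises `k` by one. -/
def momentTerm {R : Type*} [CommSemiring R] (a : ℕ → R) (k : ℕ) (z : R) (n : ℕ) : R :=
  (2 * n + 1) ^ k * a n * z ^ (2 * n)

/-- The moment series `M_k(z) = ∑ (2n+1)ᵏ aₙ z²ⁿ`, in terms of which `f(z) = z M₀(z)` satisfies
`f' = M₁` and `(z f')' = M₂`. -/
noncomputable def oddMoment (a : ℕ → ℂ) (k : ℕ) (z : ℂ) : ℂ :=
  ∑' n, momentTerm a k z n

lemma norm_momentTerm (a : ℕ → ℂ) (k : ℕ) (z : ℂ) (n : ℕ) :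
    ‖momentTerm a k z n‖ = momentTerm (fun m => ‖a m‖) k ‖z‖ n := by
  have h : ‖(2 * n + 1 : ℂ)‖ = 2 * n + 1 := by exact_mod_cast Complex.norm_natCast (2 * n + 1)
  simp only [momentTerm, norm_mul, norm_pow, h]

lemma hasDerivAt_mul_momentTerm (a : ℕ → ℂ) (k n : ℕ) (z : ℂ) :
    HasDerivAt (fun w => w * momentTerm a k w n) (momentTerm a (k + 1) z n) z := by
  have h := (hasDerivAt_pow (2 * n + 1) z).const_mul ((2 * n + 1) ^ k * a n)
  have hfun : (fun w => w * momentTerm a k w n) =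
      fun w => (2 * n + 1) ^ k * a n * w ^ (2 * n + 1) := by
    ext w
    rw [momentTerm]
    ring
  rw [hfun]
  refine h.congr_deriv ?_
  rw [momentTerm, Nat.add_sub_cancel]
  push_cast
  ring

theorem hasDerivAt_mul_oddMoment {a : ℕ → ℂ} {k : ℕ} {r : ℝ} {z : ℂ}
    (hs : Summable (momentTerm (fun n => ‖a n‖) k r)) (hz : ‖z‖ < r) :
    HasDerivAt (fun w => w * oddMoment a k w) (oddMoment a (k + 1) z) z := by
  have hball : z ∈ Metric.ball (0 : ℂ) r := mem_ball_zero_iff.2 hz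
  have hdiff (n : ℕ) : DifferentiableOn ℂ (fun w => w * momentTerm a k w n) (Metric.ball 0 r) :=
    fun w _ => (hasDerivAt_mul_momentTerm a k n w).differentiableAt.differentiableWithinAt
  have hbound (n : ℕ) (w : ℂ) (hw : w ∈ Metric.ball (0 : ℂ) r) :
      ‖w * momentTerm a k w n‖ ≤ r * momentTerm (fun m => ‖a m‖) k r n := by
    have hw' : ‖w‖ ≤ r := (mem_ball_zero_iff.1 hw).le
    rw [norm_mul, norm_momentTerm]
    simp only [momentTerm]
    have hr : 0 ≤ r := (norm_nonneg w).trans hw'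
    gcongr
  have hd := Complex.differentiableOn_tsum_of_summable_norm (hs.mul_left r) hdiff
    Metric.isOpen_ball hbound
  have hsum := Complex.hasSum_deriv_of_summable_norm (hs.mul_left r) hdiff
    Metric.isOpen_ball hbound hball
  simp only [(hasDerivAt_mul_momentTerm a k _ z).deriv] at hsum
  simp only [oddMoment, ← tsum_mul_left]
  rw [hsum.tsum_eq]
  exact (hd.differentiableAt (Metric.isOpen_ball.mem_nhds hball)).hasDerivAt

end OddSeries

section RadiusOfConvexity

/-- The quotient `1 + z f''(z) / f'(z)`, whose real part decides convexity. -/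
noncomputable def convexityQuotient (f : ℂ → ℂ) (z : ℂ) : ℂ :=
  1 + z * deriv (deriv f) z / deriv f z

variable {f : ℂ → ℂ} {α r : ℝ} {z z₀ : ℂ}

lemma continuousAt_convexityQuotient (hf : AnalyticAt ℂ f z) (hz : deriv f z ≠ 0) :
    ContinuousAt (convexityQuotient f) z :=
  continuousAt_const.add <|
    (continuousAt_id.mul hf.deriv.deriv.continuousAt).div hf.deriv.continuousAt hz

lemma convexityQuotient_eq_deriv_div (hf : AnalyticAt ℂ f z) (hz : deriv f z ≠ 0) :
    convexityQuotient f z = deriv (fun w => w * deriv f w) z / deriv f z := by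
  have h := (hasDerivAt_id' z).fun_mul hf.deriv.differentiableAt.hasDerivAt
  have h' : deriv (fun w => w * deriv f w) z = deriv f z + z * deriv (deriv f) z := by
    simpa using h.deriv
  rw [h', convexityQuotient, add_div, div_self hz]

lemma le_norm_of_forall_lt_convexityQuotient
    (hr : ∀ z : ℂ, ‖z‖ < r → α < (convexityQuotient f z).re)
    (hz₀ : (convexityQuotient f z₀).re ≤ α) : r ≤ ‖z₀‖ :=
  not_lt.1 fun h => (hr z₀ h).not_ge hz₀

theorem radiusConvex_lt_norm (hz₀ : z₀ ≠ 0) (hcont : ContinuousAt (convexityQuotient f) z₀)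
    (hlt : (convexityQuotient f z₀).re < α) : radiusConvex α f < ‖z₀‖ := by
  have hray : ContinuousAt (fun t : ℝ => (convexityQuotient f (t * z₀)).re) 1 := by
    have hcont' : ContinuousAt (convexityQuotient f) (((1 : ℝ) : ℂ) * z₀) := by simpa using hcont
    have hline : ContinuousAt (fun t : ℝ => (t : ℂ) * z₀) 1 := by fun_prop
    exact Complex.continuous_re.continuousAt.comp
      (ContinuousAt.comp (f := fun t : ℝ => (t : ℂ) * z₀) hcont' hline)
  have hnear : ∀ᶠ t : ℝ in nhdsWithin 1 (Set.Iio 1), (convexityQuotient f (t * z₀)).re < α :=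
    (hray.eventually_lt continuousAt_const (by simpa using hlt)).filter_mono nhdsWithin_le_nhds
  obtain ⟨t, ht, ht0, ht1⟩ := (hnear.and (Ioo_mem_nhdsLT one_pos)).exists
  calc radiusConvex α f ≤ ‖(t : ℂ) * z₀‖ :=
        Real.sSup_le (fun _ hr => le_norm_of_forall_lt_convexityQuotient hr.2 ht.le) (norm_nonneg _)
    _ = t * ‖z₀‖ := by rw [norm_mul, Complex.norm_real, Real.norm_of_nonneg ht0.le]
    _ < ‖z₀‖ := mul_lt_of_lt_one_left (norm_pos_iff.2 hz₀) ht1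

theorem lt_radiusConvex (hr : 0 ≤ r) (hcont : ∀ z, ‖z‖ ≤ r → ContinuousAt (convexityQuotient f) z)
    (hlt : ∀ z, ‖z‖ ≤ r → α < (convexityQuotient f z).re)
    (hz₀ : (convexityQuotient f z₀).re ≤ α) : r < radiusConvex α f := by
  have hsub : Metric.closedBall 0 r ⊆ interior {z | α < (convexityQuotient f z).re} := by
    intro z hz
    have hz' : ‖z‖ ≤ r := mem_closedBall_zero_iff.1 hz
    exact mem_interior_iff_mem_nhds.2 <| continuousAt_const.eventually_lt
      (Complex.continuous_re.continuousAt.comp (hcont z hz')) (hlt z hz')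
  obtain ⟨δ, hδ, hthick⟩ :=
    (isCompact_closedBall (0 : ℂ) r).exists_thickening_subset_open isOpen_interior hsub
  rw [thickening_closedBall hδ hr] at hthick
  have hmem (z : ℂ) (hz : ‖z‖ < δ + r) : α < (convexityQuotient f z).re :=
    interior_subset (s := {z | α < (convexityQuotient f z).re}) (hthick (mem_ball_zero_iff.2 hz))
  have hle : δ + r ≤ radiusConvex α f :=
    le_csSup ⟨‖z₀‖, fun _ hs => le_norm_of_forall_lt_convexityQuotient hs.2 hz₀⟩
      ⟨by positivity, hmem⟩
  linarith

variable {a : ℕ → ℂ}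

lemma analyticAt_mul_oddMoment (hs : Summable (momentTerm (fun n => ‖a n‖) 0 r)) (hz : ‖z‖ < r) :
    AnalyticAt ℂ (fun w => w * oddMoment a 0 w) z := by
  have hd : DifferentiableOn ℂ (fun w => w * oddMoment a 0 w) (Metric.ball 0 r) := fun w hw =>
    (hasDerivAt_mul_oddMoment hs
      (mem_ball_zero_iff.1 hw)).differentiableAt.differentiableWithinAt
  exact hd.analyticAt (Metric.isOpen_ball.mem_nhds (mem_ball_zero_iff.2 hz))

theorem convexityQuotient_mul_oddMoment (hs : ∀ k, Summable (momentTerm (fun n => ‖a n‖) k r))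
    (hz : ‖z‖ < r) (hne : oddMoment a 1 z ≠ 0) :
    convexityQuotient (fun w => w * oddMoment a 0 w) z = oddMoment a 2 z / oddMoment a 1 z := by
  have hderiv : deriv (fun w => w * oddMoment a 0 w) =ᶠ[nhds z] oddMoment a 1 := by
    filter_upwards [Metric.isOpen_ball.mem_nhds (mem_ball_zero_iff.2 hz)] with w hw
    exact (hasDerivAt_mul_oddMoment (hs 0) (mem_ball_zero_iff.1 hw)).deriv
  have hderiv₂ : deriv (fun w => w * deriv (fun w => w * oddMoment a 0 w) w) z = oddMoment a 2 z :=
    (((Filter.EventuallyEq.refl _ _).mul hderiv).deriv_eq).trans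
      (hasDerivAt_mul_oddMoment (hs 1) hz).deriv
  rw [convexityQuotient_eq_deriv_div (analyticAt_mul_oddMoment (hs 0) hz)
    (by rwa [hderiv.eq_of_nhds]), hderiv₂, hderiv.eq_of_nhds]

lemma continuousAt_convexityQuotient_mul_oddMoment
    (hs : Summable (momentTerm (fun n => ‖a n‖) 0 r)) (hz : ‖z‖ < r) (hne : oddMoment a 1 z ≠ 0) :
    ContinuousAt (convexityQuotient fun w => w * oddMoment a 0 w) z :=
  continuousAt_convexityQuotient (analyticAt_mul_oddMoment hs hz)
    (by rwa [(hasDerivAt_mul_oddMoment hs hz).deriv])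

end RadiusOfConvexity

section Subgeometric

/-- Positive coefficients, normalized by `d₀ = 1`, that decay at least as fast as the geometric
sequence `d₁ⁿ` in the sense of consecutive ratios. -/
structure IsSubgeometric (d : ℕ → ℝ) : Prop where
  pos : ∀ n, 0 < d n
  zero : d 0 = 1
  succ_le : ∀ n, d (n + 1) ≤ d 1 * d n

/-- The alternating complex coefficients `(-1)ⁿ dₙ` of the odd functions
`z ↦ ∑ (-1)ⁿ dₙ z²ⁿ⁺¹` under study. -/
def altCoeff (d : ℕ → ℝ) (n : ℕ) : ℂ :=
  (-1) ^ n * d n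

lemma summable_odd_pow_mul_geometric (k : ℕ) {t : ℝ} (ht₀ : 0 ≤ t) (ht₁ : t < 1) :
    Summable fun n : ℕ => (2 * n + 1 : ℝ) ^ k * t ^ n := by
  have hnorm : ‖t‖ < 1 := by rwa [Real.norm_of_nonneg ht₀]
  refine (((summable_pow_mul_geometric_of_norm_lt_one k hnorm).mul_left (3 ^ k)).add
    (summable_geometric_of_norm_lt_one hnorm)).of_nonneg_of_le (fun n => by positivity) fun n => ?_
  have hle : (2 * n + 1 : ℝ) ^ k ≤ 3 ^ k * n ^ k + 1 := by
    rcases n.eq_zero_or_pos with rfl | hn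
    · simp only [Nat.cast_zero, mul_zero, zero_add, one_pow]
      exact le_add_of_nonneg_left (by positivity)
    · have hn' : (1 : ℝ) ≤ n := by exact_mod_cast hn
      calc (2 * n + 1 : ℝ) ^ k ≤ (3 * n) ^ k := by gcongr; linarith
        _ ≤ 3 ^ k * n ^ k + 1 := by rw [mul_pow]; linarith
  calc (2 * n + 1 : ℝ) ^ k * t ^ n ≤ (3 ^ k * n ^ k + 1) * t ^ n := by gcongr
    _ = 3 ^ k * (n ^ k * t ^ n) + t ^ n := by ring

namespace IsSubgeometric

variable {d : ℕ → ℝ} {k N : ℕ} {r : ℝ} {z : ℂ}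

lemma le_pow (hd : IsSubgeometric d) (n : ℕ) : d n ≤ d 1 ^ n := by
  have h := le_geom (hd.pos 1).le n fun m _ => hd.succ_le m
  rwa [hd.zero, mul_one] at h

lemma momentTerm_nonneg (hd : IsSubgeometric d) (r : ℝ) (n : ℕ) : 0 ≤ momentTerm d k r n := by
  have := (hd.pos n).le
  rw [momentTerm, pow_mul]
  positivity

lemma summable_momentTerm (hd : IsSubgeometric d) (k : ℕ) (h : d 1 * r ^ 2 < 1) :
    Summable (momentTerm d k r) := by
  have h₁ := (hd.pos 1).le
  refine (summable_odd_pow_mul_geometric k (by positivity) h).of_nonneg_of_le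
    (hd.momentTerm_nonneg r) fun n => ?_
  rw [momentTerm, pow_mul, mul_assoc, mul_pow]
  gcongr
  exact hd.le_pow n

lemma norm_altCoeff (hd : IsSubgeometric d) : (fun n => ‖altCoeff d n‖) = d := by
  ext n
  simp [altCoeff, abs_of_pos (hd.pos n)]

lemma momentTerm_succ_le (hd : IsSubgeometric d) (r : ℝ) {n : ℕ} (hn : N ≤ n) :
    momentTerm d k r (n + 1) ≤
      ((2 * N + 3) / (2 * N + 1)) ^ k * (d 1 * r ^ 2) * momentTerm d k r n := by
  have hfac : (2 * n + 3 : ℝ) ≤ (2 * N + 3) / (2 * N + 1) * (2 * n + 1) := by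
    have hn' : (N : ℝ) ≤ n := by exact_mod_cast hn
    rw [div_mul_eq_mul_div, le_div_iff₀ (by positivity)]
    linarith
  have hpos := hd.pos (n + 1)
  have hle := hd.succ_le n
  calc momentTerm d k r (n + 1)
      = (2 * n + 3) ^ k * d (n + 1) * (r ^ 2 * (r ^ 2) ^ n) := by
        simp only [momentTerm]
        push_cast
        ring
    _ ≤ ((2 * N + 3) / (2 * N + 1) * (2 * n + 1)) ^ k * (d 1 * d n) * (r ^ 2 * (r ^ 2) ^ n) := by
        gcongr
    _ = _ := by
        rw [momentTerm, mul_pow, pow_mul]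
        ring

lemma antitone_momentTerm_add (hd : IsSubgeometric d)
    (h : ((2 * N + 3) / (2 * N + 1)) ^ k * (d 1 * r ^ 2) ≤ 1) :
    Antitone fun n => momentTerm d k r (n + N) :=
  antitone_nat_of_succ_le fun n => by
    rw [add_right_comm]
    exact (hd.momentTerm_succ_le r (N.le_add_left n)).trans
      (mul_le_of_le_one_left (hd.momentTerm_nonneg r _) h)

lemma summable_momentTerm_altCoeff (hd : IsSubgeometric d) (k : ℕ) (h : d 1 * ‖z‖ ^ 2 < 1) :
    Summable (momentTerm (altCoeff d) k z) := by
  refine Summable.of_norm ?_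
  simp only [norm_momentTerm, hd.norm_altCoeff]
  exact hd.summable_momentTerm k h

lemma norm_oddMoment_sub_sum_le (hd : IsSubgeometric d)
    (h : ((2 * N + 3) / (2 * N + 1)) ^ k * (d 1 * ‖z‖ ^ 2) < 1) :
    ‖oddMoment (altCoeff d) k z - ∑ n ∈ Finset.range N, momentTerm (altCoeff d) k z n‖ ≤
      momentTerm d k ‖z‖ N / (1 - ((2 * N + 3) / (2 * N + 1)) ^ k * (d 1 * ‖z‖ ^ 2)) := by
  set ρ : ℝ := ((2 * N + 3) / (2 * N + 1)) ^ k * (d 1 * ‖z‖ ^ 2)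
  have h₁ := (hd.pos 1).le
  have hρ₀ : 0 ≤ ρ := by positivity
  have hz : d 1 * ‖z‖ ^ 2 < 1 := by
    have hratio : (1 : ℝ) ≤ (2 * N + 3) / (2 * N + 1) := by
      rw [one_le_div (by positivity)]
      linarith
    exact (le_mul_of_one_le_left (by positivity) (one_le_pow₀ hratio)).trans_lt h
  have hgeom (n : ℕ) : momentTerm d k ‖z‖ (n + N) ≤ momentTerm d k ‖z‖ N * ρ ^ n := by
    have h := le_geom (u := fun n => momentTerm d k ‖z‖ (n + N)) hρ₀ n fun m _ => by
      simpa only [add_right_comm m 1 N] using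
        hd.momentTerm_succ_le ‖z‖ (N.le_add_left m)
    simpa only [zero_add, mul_comm] using h
  rw [oddMoment, ← (hd.summable_momentTerm_altCoeff k hz).sum_add_tsum_nat_add N,
    add_sub_cancel_left, div_eq_mul_inv]
  refine tsum_of_norm_bounded ((hasSum_geometric_of_lt_one hρ₀ h).mul_left _) fun n => ?_
  rw [norm_momentTerm, hd.norm_altCoeff]
  exact hgeom n

lemma oddMoment_altCoeff_ofReal (d : ℕ → ℝ) (k : ℕ) (r : ℝ) :
    oddMoment (altCoeff d) k r = ((∑' n, (-1) ^ n * momentTerm d k r n : ℝ) : ℂ) := by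
  rw [oddMoment, Complex.ofReal_tsum]
  refine tsum_congr fun n => ?_
  simp only [momentTerm, altCoeff]
  push_cast
  ring

end IsSubgeometric

end Subgeometric

section LowerBound

/- Here `x = 9 d₁ z²` and `p = d₂ / (81 d₁²)`: then `1 - x/3 + 5 p x²` and `1 - x + 25 p x²` are the
partial sums of `M₁(z)` and `M₂(z)` up to `d₂ z⁴`, and the tails are bounded by `p` and `7 p`. -/
lemma norm_two_thirds_sub_add_lt {x : ℂ} {p : ℝ} (hx : ‖x‖ ≤ 1) (hp : 0 < p) (hp' : p ≤ 1 / 81) :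
    ‖(2 / 3 - 20 * p * x : ℂ)‖ + 14 * p < ‖1 - x / 3‖ := by
  have hre : x.re ≤ 1 := (Complex.re_le_norm x).trans hx
  have hright : 1 - x.re / 3 ≤ ‖1 - x / 3‖ := by
    simpa using Complex.re_le_norm (1 - x / 3)
  have hsq :
      ‖(2 / 3 - 20 * p * x : ℂ)‖ ^ 2 = 4 / 9 - 80 / 3 * p * x.re + 400 * p ^ 2 * ‖x‖ ^ 2 := by
    have hreal : (2 / 3 - 20 * p * x : ℂ) = ((2 / 3 : ℝ) : ℂ) - ((20 * p : ℝ) : ℂ) * x := by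
      push_cast
      ring
    rw [hreal, Complex.sq_norm, Complex.sq_norm, Complex.normSq_apply, Complex.normSq_apply]
    simp only [Complex.sub_re, Complex.sub_im, Complex.re_ofReal_mul, Complex.im_ofReal_mul,
      Complex.ofReal_re, Complex.ofReal_im]
    ring
  have hx₂ : ‖x‖ ^ 2 ≤ 1 := pow_le_one₀ (norm_nonneg x) hx
  have hleft : ‖(2 / 3 - 20 * p * x : ℂ)‖ < 1 - x.re / 3 - 14 * p := by
    refine lt_of_pow_lt_pow_left₀ 2 (by linarith) ?_
    have hpx : 400 * p ^ 2 * ‖x‖ ^ 2 ≤ 400 * p ^ 2 * 1 := by gcongr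
    have hpp : p * p ≤ 1 / 81 * p := by gcongr
    have hpe : p * (1 - x.re) ≤ 1 / 81 * (1 - x.re) := by gcongr
    rw [hsq]
    nlinarith [sq_nonneg (1 - x.re)]
  linarith

lemma norm_sub_lt_of_norm_sub_quadratic_le {x u v : ℂ} {p : ℝ} (hx : ‖x‖ ≤ 1) (hp : 0 < p)
    (hp' : p ≤ 1 / 81) (hu : ‖u - (1 - x / 3 + 5 * p * x ^ 2)‖ ≤ p)
    (hv : ‖v - (1 - x + 25 * p * x ^ 2)‖ ≤ 7 * p) : ‖v - u‖ < ‖u‖ := by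
  set e₁ := u - (1 - x / 3 + 5 * p * x ^ 2) with he₁
  set e₂ := v - (1 - x + 25 * p * x ^ 2) with he₂
  have hdiff : ‖v - u‖ ≤ ‖(2 / 3 - 20 * p * x : ℂ)‖ + 8 * p := by
    calc ‖v - u‖ = ‖-(x * (2 / 3 - 20 * p * x)) + (e₂ - e₁)‖ := by
          congr 1
          rw [he₁, he₂]
          ring
      _ ≤ ‖x‖ * ‖(2 / 3 - 20 * p * x : ℂ)‖ + (‖e₂‖ + ‖e₁‖) := by
          rw [← norm_mul, ← norm_neg (x * _)]
          exact (norm_add_le _ _).trans (by gcongr; exact norm_sub_le _ _)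
      _ ≤ 1 * ‖(2 / 3 - 20 * p * x : ℂ)‖ + (7 * p + p) := by gcongr
      _ = _ := by ring
  have hone : ‖1 - x / 3‖ ≤ ‖u‖ + 6 * p := by
    calc ‖1 - x / 3‖ = ‖u - (5 * p * x ^ 2 + e₁)‖ := by
          congr 1
          rw [he₁]
          ring
      _ ≤ ‖u‖ + (‖(5 * p * x ^ 2 : ℂ)‖ + ‖e₁‖) :=
          (norm_sub_le _ _).trans (by gcongr; exact norm_add_le _ _)
      _ = ‖u‖ + (5 * p * ‖x‖ ^ 2 + ‖e₁‖) := by simp [abs_of_pos hp]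
      _ ≤ ‖u‖ + (5 * p * 1 ^ 2 + p) := by gcongr
      _ = _ := by ring
  linarith [norm_two_thirds_sub_add_lt hx hp hp']

lemma re_div_pos_of_norm_sub_lt {a b : ℂ} (h : ‖a - b‖ < ‖b‖) : 0 < (a / b).re := by
  have hb : b ≠ 0 := norm_pos_iff.1 ((norm_nonneg _).trans_lt h)
  have hlt : ‖1 - a / b‖ < 1 := by
    rwa [one_sub_div hb, norm_div, norm_sub_rev, div_lt_one (norm_pos_iff.2 hb)]
  have hre := (Complex.re_le_norm (1 - a / b)).trans_lt hlt
  rw [Complex.sub_re, Complex.one_re] at hre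
  linarith

namespace IsSubgeometric

variable {d : ℕ → ℝ} {k : ℕ} {z : ℂ}

lemma norm_oddMoment_sub_sum_three_le (hd : IsSubgeometric d) (hz : 9 * d 1 * ‖z‖ ^ 2 ≤ 1)
    (hk : (9 / 7 : ℝ) ^ k < 9) :
    ‖oddMoment (altCoeff d) k z - ∑ n ∈ Finset.range 3, momentTerm (altCoeff d) k z n‖ ≤
      7 ^ k / (9 - (9 / 7) ^ k) * (d 2 / (81 * d 1 ^ 2)) := by
  have h₁ := hd.pos 1
  have h₂ := hd.pos 2
  have ht : d 1 * ‖z‖ ^ 2 ≤ 1 / 9 := by linarith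
  have hratio : (2 * (3 : ℕ) + 3 : ℝ) / (2 * (3 : ℕ) + 1) = 9 / 7 := by norm_num
  have hρ : (9 / 7 : ℝ) ^ k * (d 1 * ‖z‖ ^ 2) ≤ (9 / 7) ^ k * (1 / 9) := by gcongr
  have hfirst : momentTerm d k ‖z‖ 3 ≤ 7 ^ k * (d 2 / (81 * d 1 ^ 2) / 9) := by
    calc momentTerm d k ‖z‖ 3 = 7 ^ k * (d 3 * ‖z‖ ^ 6) := by
          rw [momentTerm]
          norm_num [mul_assoc]
      _ ≤ 7 ^ k * (d 1 * d 2 * ‖z‖ ^ 6) := by gcongr; exact hd.succ_le 2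
      _ = 7 ^ k * (d 2 / d 1 ^ 2 * (d 1 * ‖z‖ ^ 2) ^ 3) := by field_simp
      _ ≤ 7 ^ k * (d 2 / d 1 ^ 2 * (1 / 9) ^ 3) := by gcongr
      _ = 7 ^ k * (d 2 / (81 * d 1 ^ 2) / 9) := by
        field_simp
        norm_num
  have htail := hd.norm_oddMoment_sub_sum_le (k := k) (N := 3)
    (by rw [hratio]; linarith)
  rw [hratio] at htail
  calc _ ≤ _ := htail
    _ ≤ 7 ^ k * (d 2 / (81 * d 1 ^ 2) / 9) / (1 - (9 / 7) ^ k * (1 / 9)) := by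
        gcongr
        linarith
    _ = _ := by
        have : 9 - (9 / 7 : ℝ) ^ k ≠ 0 := by linarith
        have : 1 - (9 / 7 : ℝ) ^ k * (1 / 9) ≠ 0 := by linarith
        field_simp

lemma sum_three_momentTerm_altCoeff (hd : IsSubgeometric d) (k : ℕ) (z : ℂ) :
    ∑ n ∈ Finset.range 3, momentTerm (altCoeff d) k z n =
      1 - 3 ^ k * (d 1 * z ^ 2) + 5 ^ k * (d 2 * z ^ 4) := by
  simp only [Finset.sum_range_succ, Finset.sum_range_zero, momentTerm, altCoeff, hd.zero]
  norm_num
  ring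

theorem norm_oddMoment_two_sub_one_lt (hd : IsSubgeometric d) (hz : 9 * d 1 * ‖z‖ ^ 2 ≤ 1) :
    ‖oddMoment (altCoeff d) 2 z - oddMoment (altCoeff d) 1 z‖ < ‖oddMoment (altCoeff d) 1 z‖ := by
  have h₁ := hd.pos 1
  have h₂ := hd.pos 2
  obtain ⟨p, hp⟩ : ∃ p, p = d 2 / (81 * d 1 ^ 2) := ⟨_, rfl⟩
  obtain ⟨x, hx⟩ : ∃ x : ℂ, x = 9 * d 1 * z ^ 2 := ⟨_, rfl⟩
  have hp₀ : 0 < p := hp ▸ by positivity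
  have hp₁ : p ≤ 1 / 81 := by
    rw [hp, div_le_div_iff₀ (by positivity) (by norm_num)]
    linarith [hd.le_pow 2]
  have hx₁ : ‖x‖ ≤ 1 := by simpa [hx, abs_of_pos h₁] using hz
  have hterm₁ : (d 1 * z ^ 2 : ℂ) = x / 9 := by rw [hx]; ring
  have hterm₂ : (d 2 * z ^ 4 : ℂ) = p * x ^ 2 := by
    have : (d 1 : ℂ) ≠ 0 := by exact_mod_cast h₁.ne'
    rw [hx, hp]
    push_cast
    field_simp
    norm_num
  have htail₁ := hd.norm_oddMoment_sub_sum_three_le (k := 1) hz (by norm_num)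
  have htail₂ := hd.norm_oddMoment_sub_sum_three_le (k := 2) hz (by norm_num)
  rw [hd.sum_three_momentTerm_altCoeff, hterm₁, hterm₂, ← hp] at htail₁ htail₂
  refine norm_sub_lt_of_norm_sub_quadratic_le hx₁ hp₀ hp₁ ?_ ?_
  · rw [show 1 - x / 3 + 5 * p * x ^ 2 = 1 - 3 ^ 1 * (x / 9) + 5 ^ 1 * (p * x ^ 2) by ring]
    linarith
  · rw [show 1 - x + 25 * p * x ^ 2 = 1 - 3 ^ 2 * (x / 9) + 5 ^ 2 * (p * x ^ 2) by ring]
    linarith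

end IsSubgeometric

end LowerBound

section UpperBound

/- Here `t = d₁ r²` and `p = d₂ / d₁²`. The equation for `t` says that the terms of `M₂(r)` up to
`d₂ r⁴` sum to `p t (25 t - 50/9)`, which the right-hand side has to outweigh. -/
lemma twentyfive_mul_sub_lt {p t : ℝ} (hp : 0 < p) (hp' : p ≤ 1) (ht : t * (81 - 50 * p) = 9) :
    25 * t - 50 / 9 < (49 - 81 * t) * p ^ 2 * t ^ 2 := by
  have ht₀ : 1 / 9 < t := by nlinarith
  have ht₁ : t ≤ 9 / 31 := by nlinarith
  have hpt : p * t = (81 * t - 9) / 50 := by linarith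
  have hcubic : 25 * t - 50 / 9 < (49 - 81 * t) * ((81 * t - 9) / 50) ^ 2 := by
    rcases le_total t (2 / 9) with h | h
    · have : 0 < (49 - 81 * t) * ((81 * t - 9) / 50) ^ 2 := by
        have : 0 < 49 - 81 * t := by linarith
        have : 0 < 81 * t - 9 := by linarith
        positivity
      linarith
    · nlinarith [mul_nonneg (sub_nonneg.2 h) (sub_nonneg.2 ht₁)]
  rwa [mul_assoc, ← mul_pow, hpt]

namespace IsSubgeometric

variable {d : ℕ → ℝ} {r : ℝ}

lemma summable_neg_one_pow_mul_momentTerm (hd : IsSubgeometric d) (k : ℕ)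
    (h : d 1 * r ^ 2 < 1) : Summable fun n => (-1) ^ n * momentTerm d k r n :=
  (hd.summable_momentTerm k h).of_norm_bounded fun n => by
    rw [norm_mul, norm_pow, norm_neg, norm_one, one_pow, one_mul,
      Real.norm_of_nonneg (hd.momentTerm_nonneg r n)]

lemma tsum_alternating_momentTerm_one_pos (hd : IsSubgeometric d) (h : 3 * (d 1 * r ^ 2) < 1) :
    0 < ∑' n, (-1) ^ n * momentTerm d 1 r n := by
  have hanti : Antitone (momentTerm d 1 r) :=
    hd.antitone_momentTerm_add (N := 0) (by norm_num; linarith)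
  have ht : d 1 * r ^ 2 < 1 := by linarith [mul_nonneg (hd.pos 1).le (sq_nonneg r)]
  have hle := hanti.alternating_series_le_tendsto
    (hd.summable_neg_one_pow_mul_momentTerm 1 ht).hasSum.tendsto_sum_nat 1
  generalize ∑' n, (-1) ^ n * momentTerm d 1 r n = S at hle ⊢
  simp only [Finset.sum_range_succ, Finset.sum_range_zero, momentTerm, hd.zero] at hle
  norm_num at hle
  linarith

lemma tsum_alternating_momentTerm_two_le (hd : IsSubgeometric d)
    (h : 25 * (d 1 * r ^ 2) ≤ 9) :
    ∑' n, (-1) ^ n * momentTerm d 2 r n ≤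
      1 - 9 * (d 1 * r ^ 2) + 25 * (d 2 * r ^ 4) - (49 - 81 * (d 1 * r ^ 2)) * (d 3 * r ^ 6) := by
  have hanti : Antitone fun n => momentTerm d 2 r (n + 1) :=
    hd.antitone_momentTerm_add (N := 1) (by norm_num; linarith)
  have hs := hd.summable_neg_one_pow_mul_momentTerm 2 (by linarith : d 1 * r ^ 2 < 1)
  have hshift : HasSum (fun n => (-1) ^ n * momentTerm d 2 r (n + 1))
      (momentTerm d 2 r 0 - ∑' n, (-1) ^ n * momentTerm d 2 r n) := by
    have h := ((hasSum_nat_add_iff' 1).2 hs.hasSum).neg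
    simpa [pow_succ] using h
  have hle := hanti.alternating_series_le_tendsto hshift.tendsto_sum_nat 2
  generalize ∑' n, (-1) ^ n * momentTerm d 2 r n = S at hle ⊢
  simp only [Finset.sum_range_succ, Finset.sum_range_zero, momentTerm, hd.zero] at hle
  norm_num at hle
  have h₄ : d 4 * r ^ 8 ≤ d 1 * r ^ 2 * (d 3 * r ^ 6) := by
    calc d 4 * r ^ 8 ≤ d 1 * d 3 * r ^ 8 := by gcongr; exact hd.succ_le 3
      _ = _ := by ring
  linarith

lemma tsum_alternating_momentTerm_two_neg (hd : IsSubgeometric d) (h₂₃ : d 2 ^ 3 ≤ d 1 ^ 3 * d 3)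
    (hr : r ^ 2 * (81 * d 1 ^ 2 - 50 * d 2) = 9 * d 1) :
    ∑' n, (-1) ^ n * momentTerm d 2 r n < 0 := by
  have h₁ := hd.pos 1
  have h₂ := hd.pos 2
  obtain ⟨p, hp⟩ : ∃ p, p = d 2 / d 1 ^ 2 := ⟨_, rfl⟩
  obtain ⟨t, ht⟩ : ∃ t, t = d 1 * r ^ 2 := ⟨_, rfl⟩
  have hp₀ : 0 < p := hp ▸ by positivity
  have hp₁ : p ≤ 1 := hp ▸ div_le_one_of_le₀ (hd.le_pow 2) (by positivity)
  have htp : t * (81 - 50 * p) = 9 := by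
    rw [ht, hp]
    field_simp
    linarith
  have ht₀ : 0 < t := by nlinarith
  have ht₁ : t ≤ 9 / 31 := by nlinarith
  have hterm₂ : d 2 * r ^ 4 = p * t ^ 2 := by rw [ht, hp]; field_simp
  have hterm₃ : p ^ 3 * t ^ 3 ≤ d 3 * r ^ 6 := by
    calc p ^ 3 * t ^ 3 = d 2 ^ 3 / d 1 ^ 3 * r ^ 6 := by rw [ht, hp]; field_simp
      _ ≤ d 3 * r ^ 6 := by
        gcongr
        rw [div_le_iff₀ (by positivity)]
        linarith
  have hle := hd.tsum_alternating_momentTerm_two_le (r := r) (by linarith)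
  rw [← ht, hterm₂] at hle
  calc _ ≤ _ := hle
    _ ≤ 1 - 9 * t + 25 * (p * t ^ 2) - (49 - 81 * t) * (p ^ 3 * t ^ 3) := by
        gcongr
        linarith
    _ = p * t * (25 * t - 50 / 9 - (49 - 81 * t) * p ^ 2 * t ^ 2) := by linear_combination -htp / 9
    _ < 0 := mul_neg_of_pos_of_neg (by positivity)
        (sub_neg.2 (twentyfive_mul_sub_lt hp₀ hp₁ htp))

end IsSubgeometric

end UpperBound

section RadiusBounds

namespace IsSubgeometric

variable {d : ℕ → ℝ} {z : ℂ}

lemma exists_summable_momentTerm (hd : IsSubgeometric d) (hz : d 1 * ‖z‖ ^ 2 < 1) :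
    ∃ r, ‖z‖ < r ∧ ∀ k, Summable (momentTerm (fun n => ‖altCoeff d n‖) k r) := by
  have h₁ := hd.pos 1
  refine ⟨√(((d 1)⁻¹ + ‖z‖ ^ 2) / 2), ?_, fun k => ?_⟩
  · refine Real.lt_sqrt_of_sq_lt ?_
    have : ‖z‖ ^ 2 < (d 1)⁻¹ := by rwa [← mul_one (d 1)⁻¹, lt_inv_mul_iff₀ h₁]
    linarith
  · rw [hd.norm_altCoeff]
    refine hd.summable_momentTerm k ?_
    rw [Real.sq_sqrt (by positivity)]
    field_simp
    linarith

lemma continuousAt_and_convexityQuotient_eq (hd : IsSubgeometric d) (hz : d 1 * ‖z‖ ^ 2 < 1)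
    (hne : oddMoment (altCoeff d) 1 z ≠ 0) :
    ContinuousAt (convexityQuotient fun w => w * oddMoment (altCoeff d) 0 w) z ∧
      convexityQuotient (fun w => w * oddMoment (altCoeff d) 0 w) z =
        oddMoment (altCoeff d) 2 z / oddMoment (altCoeff d) 1 z := by
  obtain ⟨r, hzr, hs⟩ := hd.exists_summable_momentTerm hz
  exact ⟨continuousAt_convexityQuotient_mul_oddMoment (hs 0) hzr hne,
    convexityQuotient_mul_oddMoment hs hzr hne⟩

theorem continuousAt_and_convexityQuotient_re_pos (hd : IsSubgeometric d)
    (hz : 9 * d 1 * ‖z‖ ^ 2 ≤ 1) :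
    ContinuousAt (convexityQuotient fun w => w * oddMoment (altCoeff d) 0 w) z ∧
      0 < (convexityQuotient (fun w => w * oddMoment (altCoeff d) 0 w) z).re := by
  have hlt := hd.norm_oddMoment_two_sub_one_lt hz
  obtain ⟨hcont, hquot⟩ := hd.continuousAt_and_convexityQuotient_eq
    (by linarith [mul_nonneg (hd.pos 1).le (sq_nonneg ‖z‖)])
    (norm_pos_iff.1 ((norm_nonneg _).trans_lt hlt))
  exact ⟨hcont, hquot ▸ re_div_pos_of_norm_sub_lt hlt⟩

theorem continuousAt_and_convexityQuotient_re_neg (hd : IsSubgeometric d)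
    (h₂₃ : d 2 ^ 3 ≤ d 1 ^ 3 * d 3) {r : ℝ}
    (hr : r ^ 2 * (81 * d 1 ^ 2 - 50 * d 2) = 9 * d 1) :
    ContinuousAt (convexityQuotient fun w => w * oddMoment (altCoeff d) 0 w) r ∧
      (convexityQuotient (fun w => w * oddMoment (altCoeff d) 0 w) r).re < 0 := by
  have ht : d 1 * r ^ 2 ≤ 9 / 31 := by
    have h : 31 * (d 1 * r ^ 2) * d 1 ≤ 9 * d 1 := by
      nlinarith [mul_le_mul_of_nonneg_left (hd.le_pow 2) (sq_nonneg r)]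
    linarith [le_of_mul_le_mul_right h (hd.pos 1)]
  have hone := hd.tsum_alternating_momentTerm_one_pos (r := r) (by linarith)
  have hnorm : ‖(r : ℂ)‖ ^ 2 = r ^ 2 := by rw [Complex.norm_real, Real.norm_eq_abs, sq_abs]
  obtain ⟨hcont, hquot⟩ := hd.continuousAt_and_convexityQuotient_eq (z := r)
    (by rw [hnorm]; linarith) (by rw [oddMoment_altCoeff_ofReal]; exact_mod_cast hone.ne')
  refine ⟨hcont, ?_⟩
  rw [hquot, oddMoment_altCoeff_ofReal, oddMoment_altCoeff_ofReal, ← Complex.ofReal_div,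
    Complex.ofReal_re]
  exact div_neg_of_neg_of_pos (hd.tsum_alternating_momentTerm_two_neg h₂₃ hr) hone

theorem radiusConvex_sq_bounds (hd : IsSubgeometric d) (h₂₃ : d 2 ^ 3 ≤ d 1 ^ 3 * d 3) :
    1 / (9 * d 1) < radiusConvex 0 (fun w => w * oddMoment (altCoeff d) 0 w) ^ 2 ∧
      radiusConvex 0 (fun w => w * oddMoment (altCoeff d) 0 w) ^ 2 <
        9 * d 1 / (81 * d 1 ^ 2 - 50 * d 2) := by
  have h₁ := hd.pos 1
  have hden : 0 < 81 * d 1 ^ 2 - 50 * d 2 := by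
    linarith [hd.le_pow 2, pow_pos h₁ 2]
  obtain ⟨r, hr⟩ : ∃ r, r = √(9 * d 1 / (81 * d 1 ^ 2 - 50 * d 2)) := ⟨_, rfl⟩
  have hr₀ : 0 < r := hr ▸ Real.sqrt_pos.2 (by positivity)
  have hr₂ : r ^ 2 = 9 * d 1 / (81 * d 1 ^ 2 - 50 * d 2) := hr ▸ Real.sq_sqrt (by positivity)
  obtain ⟨hcont, hneg⟩ :=
    hd.continuousAt_and_convexityQuotient_re_neg h₂₃
      (by rw [hr₂, div_mul_cancel₀ _ hden.ne'])
  have hsq {z : ℂ} (hz : ‖z‖ ≤ √(1 / (9 * d 1))) : 9 * d 1 * ‖z‖ ^ 2 ≤ 1 := by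
    have h := (Real.le_sqrt (norm_nonneg z) (by positivity)).1 hz
    rwa [le_div_iff₀' (by positivity)] at h
  have hlow : √(1 / (9 * d 1)) < radiusConvex 0 fun w => w * oddMoment (altCoeff d) 0 w :=
    lt_radiusConvex (Real.sqrt_nonneg _)
      (fun z hz => (hd.continuousAt_and_convexityQuotient_re_pos (hsq hz)).1)
      (fun z hz => (hd.continuousAt_and_convexityQuotient_re_pos (hsq hz)).2) hneg.le
  have hupp : radiusConvex 0 (fun w => w * oddMoment (altCoeff d) 0 w) < r := by
    have h := radiusConvex_lt_norm (by exact_mod_cast hr₀.ne') hcont hneg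
    rwa [Complex.norm_real, Real.norm_of_nonneg hr₀.le] at h
  exact ⟨(Real.sqrt_lt' ((Real.sqrt_nonneg _).trans_lt hlow)).1 hlow,
    hr₂ ▸ pow_lt_pow_left₀ hupp ((Real.sqrt_nonneg _).trans hlow.le) two_ne_zero⟩

end IsSubgeometric

end RadiusBounds

section QGamma

lemma qPochInf_pos {a q : ℝ} (hq0 : 0 ≤ q) (hq1 : q < 1) (ha : a < 1) : 0 < qPochInf a q := by
  have hfac (k : ℕ) : 0 < 1 - a * q ^ k := by
    have hk : q ^ k ≤ 1 := pow_le_one₀ hq0 hq1.le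
    have hk₀ : 0 ≤ q ^ k := pow_nonneg hq0 k
    rcases le_total a 0 with ha₀ | ha₀
    · linarith [mul_nonpos_of_nonpos_of_nonneg ha₀ hk₀]
    · linarith [mul_le_of_le_one_right ha₀ hk]
  have hlog : Summable fun k : ℕ => Real.log (1 - a * q ^ k) := by
    simpa only [sub_eq_add_neg] using Real.summable_log_one_add_of_summable
      ((summable_geometric_of_lt_one hq0 hq1).mul_left a).neg
  rw [qPochInf, ← Real.rexp_tsum_eq_tprod hfac hlog]
  exact Real.exp_pos _

lemma qPochInf_eq_mul (a : ℝ) {q : ℝ} (hq : |q| < 1) :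
    qPochInf a q = (1 - a) * qPochInf (a * q) q := by
  have hshift (k : ℕ) : 1 - a * q ^ (k + 1) = 1 + -(a * q * q ^ k) := by ring
  have hmul : Multipliable fun k : ℕ => 1 - a * q ^ (k + 1) := by
    simp only [hshift]
    exact multipliable_one_add_of_summable
      ((summable_geometric_of_abs_lt_one hq).mul_left (a * q)).neg.norm
  rw [qPochInf, tprod_eq_zero_mul' (f := fun k : ℕ => 1 - a * q ^ k) hmul, qPochInf]
  simp only [pow_zero, mul_one, pow_succ', mul_assoc]

variable {q x : ℝ}

lemma qGamma_pos (hq0 : 0 < q) (hq1 : q < 1) (hx : 0 < x) : 0 < qGamma q x :=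
  div_pos (mul_pos (qPochInf_pos hq0.le hq1 hq1) (Real.rpow_pos_of_pos (sub_pos.2 hq1) _))
    (qPochInf_pos hq0.le hq1 (Real.rpow_lt_one hq0.le hq1 hx))

lemma qGamma_add_one (hq0 : 0 < q) (hq1 : q < 1) (hx : 0 < x) :
    qGamma q (x + 1) = (1 - q ^ x) / (1 - q) * qGamma q x := by
  have hqx : 0 < 1 - q ^ x := sub_pos.2 (Real.rpow_lt_one hq0.le hq1 hx)
  have hq : 0 < 1 - q := sub_pos.2 hq1
  have hpoch : qPochInf (q ^ x) q = (1 - q ^ x) * qPochInf (q ^ (x + 1)) q := by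
    rw [qPochInf_eq_mul _ (abs_lt.2 ⟨by linarith, hq1⟩), ← Real.rpow_add_one hq0.ne']
  have hpow : (1 - q) ^ (1 - x) = (1 - q) ^ (1 - (x + 1)) * (1 - q) := by
    rw [← Real.rpow_add_one hq.ne']
    congr 1
    ring
  rw [qGamma, qGamma, hpoch, hpow]
  field_simp

lemma qGamma_add_two (hq0 : 0 < q) (hq1 : q < 1) (hx : 0 < x) :
    qGamma q (x + 2) = (1 - q ^ x) * (1 - q * q ^ x) / (1 - q) ^ 2 * qGamma q x := by
  rw [← one_add_one_eq_two, ← add_assoc, qGamma_add_one hq0 hq1 (by linarith),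
    qGamma_add_one hq0 hq1 hx, Real.rpow_add_one hq0.ne']
  have hq : 1 - q ≠ 0 := (sub_pos.2 hq1).ne'
  field_simp

end QGamma

section MittagLeffler

/-- The absolute values `σ²ⁿ qⁿ⁽ⁿ⁻¹⁾ Γ_q(γ+1) / Γ_q(2n+γ+1)` of the coefficients of `z²ⁿ⁺¹` in
`gML γ σ q`. -/
noncomputable def qMLCoeff (γ σ q : ℝ) (n : ℕ) : ℝ :=
  σ ^ (2 * n) * q ^ (n * (n - 1)) * qGamma q (γ + 1) / qGamma q (2 * n + γ + 1)

/-- The ratio of consecutive coefficients `qMLCoeff γ σ q`, as a function of `u = q²ⁿ`. -/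
noncomputable def qMLRatio (γ σ q u : ℝ) : ℝ :=
  σ ^ 2 * (1 - q) ^ 2 * u / ((1 - q ^ (γ + 1) * u) * (1 - q * q ^ (γ + 1) * u))

lemma gML_eq_mul_oddMoment (γ σ q : ℝ) :
    gML γ σ q = fun z => z * oddMoment (altCoeff (qMLCoeff γ σ q)) 0 z := by
  ext z
  rw [gML, qML, oddMoment, mul_assoc, ← tsum_mul_left]
  congr 2
  ext n
  simp only [momentTerm, altCoeff, qMLCoeff]
  push_cast
  ring

variable {γ σ q : ℝ}

lemma qMLCoeff_pos (hq0 : 0 < q) (hq1 : q < 1) (hσ : 0 < σ) (hγ : -1 < γ) (n : ℕ) :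
    0 < qMLCoeff γ σ q n := by
  have hnum := qGamma_pos hq0 hq1 (by linarith : 0 < γ + 1)
  have hden := qGamma_pos hq0 hq1 (by linarith [n.cast_nonneg (α := ℝ)] : 0 < 2 * n + γ + 1)
  rw [qMLCoeff]
  positivity

lemma qMLCoeff_zero (hq0 : 0 < q) (hq1 : q < 1) (hγ : -1 < γ) : qMLCoeff γ σ q 0 = 1 := by
  simp [qMLCoeff, (qGamma_pos hq0 hq1 (by linarith : 0 < γ + 1)).ne']

lemma qMLCoeff_one (γ σ q : ℝ) :
    qMLCoeff γ σ q 1 = σ ^ 2 * qGamma q (γ + 1) / qGamma q (γ + 3) := by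
  rw [qMLCoeff, show 2 * ((1 : ℕ) : ℝ) + γ + 1 = γ + 3 by push_cast; ring]
  norm_num

lemma qMLCoeff_two (γ σ q : ℝ) :
    qMLCoeff γ σ q 2 = σ ^ 4 * q ^ 2 * qGamma q (γ + 1) / qGamma q (γ + 5) := by
  rw [qMLCoeff, show 2 * ((2 : ℕ) : ℝ) + γ + 1 = γ + 5 by push_cast; ring]

lemma qMLCoeff_succ (hq0 : 0 < q) (hq1 : q < 1) (hγ : -1 < γ) (n : ℕ) :
    qMLCoeff γ σ q (n + 1) = qMLRatio γ σ q (q ^ (2 * n)) * qMLCoeff γ σ q n := by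
  have hx : 0 < 2 * (n : ℝ) + γ + 1 := by linarith [n.cast_nonneg (α := ℝ)]
  have hpow : q ^ (2 * (n : ℝ) + γ + 1) = q ^ (γ + 1) * q ^ (2 * n) := by
    rw [add_assoc, add_comm, Real.rpow_add hq0, ← Real.rpow_natCast]
    push_cast
    rfl
  have hexp : (n + 1) * (n + 1 - 1) = n * (n - 1) + 2 * n := by
    rcases n with _ | n
    · rfl
    · simp only [Nat.add_sub_cancel]
      ring
  have hsucc : 2 * ((n + 1 : ℕ) : ℝ) + γ + 1 = 2 * n + γ + 1 + 2 := by
    push_cast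
    ring
  rw [qMLCoeff, qMLCoeff, qMLRatio, hsucc, qGamma_add_two hq0 hq1 hx, hpow, hexp, pow_add q,
    mul_add, mul_one, pow_add σ]
  field_simp

section Ratio

variable {u : ℝ}

lemma qMLRatio_factors_pos (hq0 : 0 < q) (hq1 : q < 1) (hγ : -1 < γ) (hu : u ≤ 1) :
    0 < 1 - q ^ (γ + 1) * u ∧ 0 < 1 - q * q ^ (γ + 1) * u := by
  have hy₀ : 0 < q ^ (γ + 1) := Real.rpow_pos_of_pos hq0 _
  have hy₁ : q ^ (γ + 1) < 1 := Real.rpow_lt_one hq0.le hq1 (by linarith)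
  exact ⟨sub_pos.2 ((mul_le_of_le_one_right hy₀.le hu).trans_lt hy₁), sub_pos.2
    ((mul_le_of_le_one_right (mul_pos hq0 hy₀).le hu).trans_lt (mul_lt_one_of_nonneg_of_lt_one_left
      hq0.le hq1 hy₁.le))⟩

lemma qMLRatio_monotoneOn (hq0 : 0 < q) (hq1 : q < 1) (hγ : -1 < γ) :
    MonotoneOn (qMLRatio γ σ q) (Set.Icc 0 1) := by
  intro u hu v hv huv
  obtain ⟨hu₁, -⟩ := qMLRatio_factors_pos hq0 hq1 hγ hu.2
  obtain ⟨hv₁, hv₂⟩ := qMLRatio_factors_pos hq0 hq1 hγ hv.2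
  have hv₀ := hv.1
  unfold qMLRatio
  gcongr

lemma one_sub_mul_one_sub_sq_le {c s : ℝ} (hc : 0 ≤ c) :
    (1 - c) * (1 - c * s ^ 2) ≤ (1 - c * s) ^ 2 := by
  linear_combination mul_nonneg hc (sq_nonneg (1 - s))

lemma qMLRatio_sq_le (hq0 : 0 < q) (hq1 : q < 1) (hγ : -1 < γ) (hu₀ : 0 ≤ u) (hu₁ : u ≤ 1) :
    qMLRatio γ σ q u ^ 2 ≤ qMLRatio γ σ q 1 * qMLRatio γ σ q (u ^ 2) := by
  have hy₀ : 0 < q ^ (γ + 1) := Real.rpow_pos_of_pos hq0 _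
  obtain ⟨h₁, h₁'⟩ := qMLRatio_factors_pos hq0 hq1 hγ le_rfl
  obtain ⟨h₂, h₂'⟩ := qMLRatio_factors_pos hq0 hq1 hγ (pow_le_one₀ hu₀ hu₁)
  rw [mul_one] at h₁ h₁'
  have hle := one_sub_mul_one_sub_sq_le (s := u) hy₀.le
  have hle' := one_sub_mul_one_sub_sq_le (s := u) (mul_pos hq0 hy₀).le
  simp only [qMLRatio, mul_one]
  calc _ = (σ ^ 2 * (1 - q) ^ 2 * u) ^ 2 /
        ((1 - q ^ (γ + 1) * u) ^ 2 * (1 - q * q ^ (γ + 1) * u) ^ 2) := by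
        rw [div_pow, mul_pow (1 - q ^ (γ + 1) * u)]
    _ ≤ (σ ^ 2 * (1 - q) ^ 2 * u) ^ 2 / ((1 - q ^ (γ + 1)) * (1 - q ^ (γ + 1) * u ^ 2) *
          ((1 - q * q ^ (γ + 1)) * (1 - q * q ^ (γ + 1) * u ^ 2))) := by
        gcongr
    _ = _ := by
        rw [div_mul_div_comm]
        congr 1 <;> ring

end Ratio

lemma isSubgeometric_qMLCoeff (hq0 : 0 < q) (hq1 : q < 1) (hσ : 0 < σ) (hγ : -1 < γ) :
    IsSubgeometric (qMLCoeff γ σ q) where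
  pos := qMLCoeff_pos hq0 hq1 hσ hγ
  zero := qMLCoeff_zero hq0 hq1 hγ
  succ_le n := by
    have hmono : qMLRatio γ σ q (q ^ (2 * n)) ≤ qMLRatio γ σ q (q ^ (2 * 0)) :=
      qMLRatio_monotoneOn hq0 hq1 hγ ⟨by positivity, pow_le_one₀ hq0.le hq1.le⟩ (by simp)
        (pow_le_pow_of_le_one hq0.le hq1.le (by simp))
    rw [qMLCoeff_succ hq0 hq1 hγ n, ← zero_add 1, qMLCoeff_succ hq0 hq1 hγ 0,
      qMLCoeff_zero hq0 hq1 hγ, mul_one]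
    exact mul_le_mul_of_nonneg_right hmono (qMLCoeff_pos hq0 hq1 hσ hγ n).le

lemma qMLCoeff_two_pow_three_le (hq0 : 0 < q) (hq1 : q < 1) (hσ : 0 < σ) (hγ : -1 < γ) :
    qMLCoeff γ σ q 2 ^ 3 ≤ qMLCoeff γ σ q 1 ^ 3 * qMLCoeff γ σ q 3 := by
  have h₁ := qMLCoeff_pos hq0 hq1 hσ hγ 1
  have h₂ := qMLCoeff_pos hq0 hq1 hσ hγ 2
  have hr₀ : qMLCoeff γ σ q 1 = qMLRatio γ σ q 1 := by
    simpa [qMLCoeff_zero hq0 hq1 hγ] using qMLCoeff_succ (σ := σ) hq0 hq1 hγ 0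
  have hr₁ : qMLCoeff γ σ q 2 = qMLRatio γ σ q (q ^ 2) * qMLCoeff γ σ q 1 :=
    qMLCoeff_succ hq0 hq1 hγ 1
  have hr₂ : qMLCoeff γ σ q 3 = qMLRatio γ σ q ((q ^ 2) ^ 2) * qMLCoeff γ σ q 2 := by
    rw [← pow_mul]
    exact qMLCoeff_succ hq0 hq1 hγ 2
  have hsq := qMLRatio_sq_le (σ := σ) hq0 hq1 hγ (sq_nonneg q) (pow_le_one₀ hq0.le hq1.le)
  calc qMLCoeff γ σ q 2 ^ 3
      = qMLRatio γ σ q (q ^ 2) ^ 2 * (qMLCoeff γ σ q 1 ^ 2 * qMLCoeff γ σ q 2) := by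
        nth_rewrite 1 [hr₁]
        rw [hr₁]
        ring
    _ ≤ qMLRatio γ σ q 1 * qMLRatio γ σ q ((q ^ 2) ^ 2) *
          (qMLCoeff γ σ q 1 ^ 2 * qMLCoeff γ σ q 2) := by gcongr
    _ = qMLCoeff γ σ q 1 ^ 3 * qMLCoeff γ σ q 3 := by
        rw [hr₂, ← hr₀]
        ring

end MittagLeffler

theorem stmt16_general (q σ γ : ℝ) (hq0 : 0 < q) (hq1 : q < 1) (hσ : 0 < σ) (hγ : -1 < γ) :
    qGamma q (γ + 3) / (9 * σ ^ 2 * qGamma q (γ + 1)) <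
      radiusConvex 0 (gML γ σ q) ^ 2 ∧
    radiusConvex 0 (gML γ σ q) ^ 2 <
      9 * qGamma q (γ + 3) * qGamma q (γ + 5) /
        (σ ^ 2 * (81 * qGamma q (γ + 1) * qGamma q (γ + 5) -
          50 * q ^ 2 * qGamma q (γ + 3) ^ 2)) := by
  have hΓ₁ := qGamma_pos hq0 hq1 (by linarith : 0 < γ + 1)
  have hΓ₃ := qGamma_pos hq0 hq1 (by linarith : 0 < γ + 3)
  have hΓ₅ := qGamma_pos hq0 hq1 (by linarith : 0 < γ + 5)
  have hbounds := (isSubgeometric_qMLCoeff hq0 hq1 hσ hγ).radiusConvex_sq_bounds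
    (qMLCoeff_two_pow_three_le hq0 hq1 hσ hγ)
  rw [← gML_eq_mul_oddMoment, qMLCoeff_one, qMLCoeff_two] at hbounds
  convert hbounds using 2
  · field_simp
  · have hden : 81 * (σ ^ 2 * qGamma q (γ + 1) / qGamma q (γ + 3)) ^ 2 -
          50 * (σ ^ 4 * q ^ 2 * qGamma q (γ + 1) / qGamma q (γ + 5)) =
        σ ^ 4 * qGamma q (γ + 1) / (qGamma q (γ + 3) ^ 2 * qGamma q (γ + 5)) *
          (81 * qGamma q (γ + 1) * qGamma q (γ + 5) - 50 * q ^ 2 * qGamma q (γ + 3) ^ 2) := by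
      field_simp
    rw [hden]
    field_simp

theorem stmt16 (q σ γ : ℝ) (hq0 : 0 < q) (hq1 : q < 1) (hσ : 0 < σ)
    (hγ0 : 0 ≤ γ) (hγ2 : γ < 2) (hR : condR q γ) :
    qGamma q (γ + 3) / (9 * σ ^ 2 * qGamma q (γ + 1)) <
      radiusConvex 0 (gML γ σ q) ^ 2 ∧
    radiusConvex 0 (gML γ σ q) ^ 2 <
      9 * qGamma q (γ + 3) * qGamma q (γ + 5) /
        (σ ^ 2 * (81 * qGamma q (γ + 1) * qGamma q (γ + 5) -
          50 * q ^ 2 * qGamma q (γ + 3) ^ 2)) := by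
  exact stmt16_general q σ γ hq0 hq1 hσ (by linarith)
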